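/- (Convergence of feasible policy iteration) Assume 𝒳 and 𝒰 are finite and nonempty and the maximum feasible region X* is nonempty. Let π_k and π_{k+1} be policies such that for every x ∈ X^{π_k}: F^{π_k}(f(x, π_{k+1}(x))) = 0 and r(x, π_{k+1}(x)) + γ·V^{π_k}(f(x, π_{k+1}(x))) ≥ r(x, u) + γ·V^{π_k}(f(x, u)) for every u ∈ 𝒰 with F^{π_k}(f(x, u)) = 0; and for every x ∉ X^{π_k}: F^{π_k}(f(x, π_{k+1}(x))) ≤ F^{π_k}(f(x, u)) for every u ∈ 𝒰. If F^{π_{k+1}}(x) = F^{π_k}(x) for all x ∈ 𝒳 and V^{π_{k+1}}(x) = V^{π_k}(x) for all x ∈ X*, then F^{π_k} = F* on 𝒳 and V^{π_k} = V* on X*. -/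

import Mathlib

/-!
Since the improvement step changes nothing, the CDF `F` of `πk` is also the CDF of `πk1`. The
action of `πk1` minimises `F` at the successor state (the minimum being `0` on the feasible
region), so self-consistency of `F` for `πk1` says that `F x ≤ γ * F (f x u)` for every action
`u` whenever `h x ≤ 0`. Iterating along a trajectory of any policy `π` until the first violation
(or forever) gives `F ≤ F^π` (`le_Fcdf_of_le_step`), so `F = F*` and the feasible region of `πk`
is the maximum one.

On that region the value `V` of `πk` equals the value of `πk1`, and `πk1` is greedy with respect
to `V` among actions that stay in the region; hence `V` dominates the one-step backup of `V` under
every policy keeping the region invariant. Telescoping the discounted rewards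
(`Vval_le_of_step_le`) shows that no policy in `Π*` exceeds `V`, while `πk` itself lies in `Π*`.
-/

open scoped Classical

variable {X U : Type*}

/-- Trajectory from `x` under policy `π`: `x₀ = x`, `x_{t+1} = f xₜ (π xₜ)`. -/
def traj (f : X → U → X) (π : X → U) (x : X) : ℕ → X
  | 0 => x
  | t + 1 => f (traj f π x t) (π (traj f π x t))

/-- Constraint indicator: `c(x) = 1` if `h x > 0`, else `0`. -/
noncomputable def cInd (h : X → ℝ) (x : X) : ℝ := if h x > 0 then 1 else 0

/-- Constraint decay function `F^π(x) = γ ^ (N^π x)` with `γ ^ ∞ := 0`,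
where `N^π x` is the least `t` with `h (xₜ) > 0` along the trajectory. -/
noncomputable def Fcdf (f : X → U → X) (h : X → ℝ) (γ : ℝ) (π : X → U) (x : X) : ℝ :=
  if hx : ∃ t, h (traj f π x t) > 0 then γ ^ Nat.find hx else 0

/-- Feasible region of a policy `π`. -/
def Xfeas (f : X → U → X) (h : X → ℝ) (π : X → U) : Set X :=
  {x | ∀ t, h (traj f π x t) ≤ 0}

/-- Maximum feasible region. -/
def Xstar (f : X → U → X) (h : X → ℝ) : Set X :=
  {x | ∃ π : X → U, x ∈ Xfeas f h π}

/-- Optimal constraint decay function: infimum of `F^π` over all policies. -/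
noncomputable def Fstar (f : X → U → X) (h : X → ℝ) (γ : ℝ) (x : X) : ℝ :=
  ⨅ π : X → U, Fcdf f h γ π x

/-- State-value function of a policy. -/
noncomputable def Vval (f : X → U → X) (r : X → U → ℝ) (γ : ℝ) (π : X → U) (x : X) : ℝ :=
  ∑' t : ℕ, γ ^ t * r (traj f π x t) (π (traj f π x t))

/-- Optimal state-value function: max of `V^π` over policies whose feasible
region equals the maximum feasible region. -/
noncomputable def Vstar (f : X → U → X) (h : X → ℝ) (r : X → U → ℝ) (γ : ℝ) (x : X) : ℝ :=
  ⨆ π : {π : X → U // Xfeas f h π = Xstar f h}, Vval f r γ π.1 x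

theorem traj_succ_left (f : X → U → X) (π : X → U) (x : X) (t : ℕ) :
    traj f π x (t + 1) = traj f π (f x (π x)) t := by
  induction t with
  | zero => rfl
  | succ t ih =>
    rw [traj, ih]
    rfl

theorem Fcdf_nonneg (f : X → U → X) (h : X → ℝ) {γ : ℝ} (hγ0 : 0 < γ) (π : X → U) (x : X) :
    0 ≤ Fcdf f h γ π x := by
  unfold Fcdf
  split_ifs <;> positivity

theorem Fcdf_le_one (f : X → U → X) (h : X → ℝ) {γ : ℝ} (hγ0 : 0 < γ) (hγ1 : γ < 1)
    (π : X → U) (x : X) : Fcdf f h γ π x ≤ 1 := by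
  unfold Fcdf
  split_ifs
  · exact pow_le_one₀ hγ0.le hγ1.le
  · exact zero_le_one

theorem Fcdf_eq_zero_iff (f : X → U → X) (h : X → ℝ) {γ : ℝ} (hγ0 : 0 < γ) (π : X → U) (x : X) :
    Fcdf f h γ π x = 0 ↔ x ∈ Xfeas f h π := by
  unfold Fcdf Xfeas
  split_ifs with hx
  · obtain ⟨t, ht⟩ := hx
    exact iff_of_false (pow_pos hγ0 _).ne' fun hf => (hf t).not_gt ht
  · exact iff_of_true rfl fun t => not_lt.mp fun ht => hx ⟨t, ht⟩

/-- Self-consistency of the CDF at a state satisfying the constraint. -/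
theorem Fcdf_step (f : X → U → X) (h : X → ℝ) (γ : ℝ) (π : X → U) {x : X} (hx : h x ≤ 0) :
    Fcdf f h γ π x = γ * Fcdf f h γ π (f x (π x)) := by
  unfold Fcdf
  by_cases H : ∃ t, h (traj f π (f x (π x)) t) > 0
  · have H' : ∃ t, h (traj f π x t) > 0 := by
      obtain ⟨t, ht⟩ := H
      exact ⟨t + 1, by rwa [traj_succ_left]⟩
    have hfind : Nat.find H' = Nat.find H + 1 := by
      rw [Nat.find_eq_iff]
      refine ⟨by rw [traj_succ_left]; exact Nat.find_spec H, fun n hn => ?_⟩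
      cases n with
      | zero => exact hx.not_gt
      | succ n =>
        rw [traj_succ_left]
        exact Nat.find_min H (by omega)
    rw [dif_pos H, dif_pos H', hfind, pow_succ']
  · have H' : ¬ ∃ t, h (traj f π x t) > 0 := by
      rintro ⟨t, ht⟩
      cases t with
      | zero => exact hx.not_gt ht
      | succ t => exact H ⟨t, by rwa [traj_succ_left] at ht⟩
    rw [dif_neg H, dif_neg H', mul_zero]

/-- A function bounded by `1` which, at constraint-satisfying states, is at most `γ` times its
value at the successor under every action is a lower bound for the CDF of every policy. -/
theorem le_Fcdf_of_le_step (f : X → U → X) (h : X → ℝ) {γ : ℝ} (hγ0 : 0 < γ) (hγ1 : γ < 1)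
    (G : X → ℝ) (hG1 : ∀ x, G x ≤ 1) (hG : ∀ x, h x ≤ 0 → ∀ u, G x ≤ γ * G (f x u))
    (π : X → U) (x : X) : G x ≤ Fcdf f h γ π x := by
  have key : ∀ n : ℕ, (∀ t < n, h (traj f π x t) ≤ 0) → G x ≤ γ ^ n * G (traj f π x n) := by
    intro n
    induction n with
    | zero => intro _; simp [traj]
    | succ n ih =>
      intro hn
      calc G x ≤ γ ^ n * G (traj f π x n) := ih fun t ht => hn t (by omega)
        _ ≤ γ ^ n * (γ * G (traj f π x (n + 1))) :=
          mul_le_mul_of_nonneg_left (hG _ (hn n (by omega)) _) (by positivity)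
        _ = γ ^ (n + 1) * G (traj f π x (n + 1)) := by ring
  have key' : ∀ n : ℕ, (∀ t < n, h (traj f π x t) ≤ 0) → G x ≤ γ ^ n := fun n hn =>
    (key n hn).trans (mul_le_of_le_one_right (by positivity) (hG1 _))
  unfold Fcdf
  split_ifs with hx
  · exact key' _ fun t ht => not_lt.mp (Nat.find_min hx ht)
  · exact ge_of_tendsto' (tendsto_pow_atTop_nhds_zero_of_lt_one hγ0.le hγ1) fun n =>
      key' n fun t _ => not_lt.mp fun ht => hx ⟨t, ht⟩

theorem summable_reward [Finite X] [Finite U] (f : X → U → X) (r : X → U → ℝ) {γ : ℝ}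
    (hγ0 : 0 < γ) (hγ1 : γ < 1) (π : X → U) (x : X) :
    Summable fun t : ℕ => γ ^ t * r (traj f π x t) (π (traj f π x t)) := by
  obtain ⟨C, hC⟩ := (Set.finite_range fun p : X × U => |r p.1 p.2|).bddAbove
  refine Summable.of_norm_bounded ((summable_geometric_of_lt_one hγ0.le hγ1).mul_right C)
    fun t => ?_
  rw [Real.norm_eq_abs, abs_mul, abs_of_pos (pow_pos hγ0 t)]
  exact mul_le_mul_of_nonneg_left (hC ⟨(traj f π x t, π (traj f π x t)), rfl⟩) (by positivity)

/-- Bellman self-consistency of the state-value function. -/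
theorem Vval_step [Finite X] [Finite U] (f : X → U → X) (r : X → U → ℝ) {γ : ℝ}
    (hγ0 : 0 < γ) (hγ1 : γ < 1) (π : X → U) (x : X) :
    Vval f r γ π x = r x (π x) + γ * Vval f r γ π (f x (π x)) := by
  unfold Vval
  rw [(summable_reward f r hγ0 hγ1 π x).tsum_eq_zero_add, ← tsum_mul_left]
  simp only [traj_succ_left, pow_succ', mul_assoc, pow_zero, one_mul]
  rfl

/-- If `W` dominates the one-step backup of `W` along `π` on a set invariant under `π`, then
`W` dominates the value of `π` on that set. -/
theorem Vval_le_of_step_le [Finite X] [Finite U] (f : X → U → X) (r : X → U → ℝ) {γ : ℝ}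
    (hγ0 : 0 < γ) (hγ1 : γ < 1) (π : X → U) (S : Set X) (hS : ∀ x ∈ S, f x (π x) ∈ S)
    (W : X → ℝ) (hW : ∀ x ∈ S, r x (π x) + γ * W (f x (π x)) ≤ W x) {x : X} (hx : x ∈ S) :
    Vval f r γ π x ≤ W x := by
  have hmem : ∀ t, traj f π x t ∈ S := by
    intro t
    induction t with
    | zero => exact hx
    | succ t ih => exact hS _ ih
  have hpart : ∀ n : ℕ, (∑ t ∈ Finset.range n, γ ^ t * r (traj f π x t) (π (traj f π x t)))
      + γ ^ n * W (traj f π x n) ≤ W x := by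
    intro n
    induction n with
    | zero => simp [traj]
    | succ n ih =>
      have hstep := mul_le_mul_of_nonneg_left (hW _ (hmem n)) (pow_pos hγ0 n).le
      rw [Finset.sum_range_succ, pow_succ, traj]
      linarith
  obtain ⟨C, hC⟩ := (Set.finite_range fun y => |W y|).bddAbove
  -- the remainder `γ ^ n * W xₙ` vanishes because `W` is bounded on the finite state space
  have hrem : Filter.Tendsto (fun n : ℕ => γ ^ n * W (traj f π x n)) Filter.atTop (nhds 0) := by
    have hg : Filter.Tendsto (fun n : ℕ => γ ^ n * C) Filter.atTop (nhds 0) := by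
      simpa using (tendsto_pow_atTop_nhds_zero_of_lt_one hγ0.le hγ1).mul_const C
    refine squeeze_zero_norm (fun n => ?_) hg
    rw [Real.norm_eq_abs, abs_mul, abs_of_pos (pow_pos hγ0 n)]
    exact mul_le_mul_of_nonneg_left (hC ⟨traj f π x n, rfl⟩) (by positivity)
  have hlim := (summable_reward f r hγ0 hγ1 π x).hasSum.tendsto_sum_nat.add hrem
  rw [add_zero] at hlim
  exact le_of_tendsto' hlim hpart

/-- Convergence of feasible policy iteration: if a region-wise
policy improvement step leaves both the CDF (on all of `X`) and the
state-value function (on `X*`) unchanged, then they are optimal. -/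
theorem fpi_convergence [Finite X] [Finite U] [Nonempty U]
    (f : X → U → X) (h : X → ℝ) (r : X → U → ℝ) (γ : ℝ)
    (hγ0 : 0 < γ) (hγ1 : γ < 1) (hXs : (Xstar f h).Nonempty)
    (πk πk1 : X → U)
    (h1 : ∀ x ∈ Xfeas f h πk, Fcdf f h γ πk (f x (πk1 x)) = 0)
    (h2 : ∀ x ∈ Xfeas f h πk, ∀ u : U, Fcdf f h γ πk (f x u) = 0 →
      r x u + γ * Vval f r γ πk (f x u) ≤
        r x (πk1 x) + γ * Vval f r γ πk (f x (πk1 x)))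
    (h3 : ∀ x ∉ Xfeas f h πk, ∀ u : U,
      Fcdf f h γ πk (f x (πk1 x)) ≤ Fcdf f h γ πk (f x u))
    (hF : ∀ x : X, Fcdf f h γ πk1 x = Fcdf f h γ πk x)
    (hV : ∀ x ∈ Xstar f h, Vval f r γ πk1 x = Vval f r γ πk x) :
    (∀ x : X, Fcdf f h γ πk x = Fstar f h γ x) ∧
    (∀ x ∈ Xstar f h, Vval f r γ πk x = Vstar f h r γ x) := by
  have hgreedy : ∀ x u, Fcdf f h γ πk (f x (πk1 x)) ≤ Fcdf f h γ πk (f x u) := by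
    intro x u
    by_cases hx : x ∈ Xfeas f h πk
    · rw [h1 x hx]
      exact Fcdf_nonneg f h hγ0 πk _
    · exact h3 x hx u
  have hle : ∀ (π : X → U) x, Fcdf f h γ πk x ≤ Fcdf f h γ π x := by
    refine le_Fcdf_of_le_step f h hγ0 hγ1 _ (Fcdf_le_one f h hγ0 hγ1 πk) fun x hx u => ?_
    rw [← hF x, Fcdf_step f h γ πk1 hx, hF]
    exact mul_le_mul_of_nonneg_left (hgreedy x u) hγ0.le
  have hX : Xfeas f h πk = Xstar f h := by
    ext x
    refine ⟨fun hx => ⟨πk, hx⟩, ?_⟩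
    rintro ⟨π, hx⟩
    rw [← Fcdf_eq_zero_iff f h hγ0] at hx ⊢
    exact le_antisymm (hx ▸ hle π x) (Fcdf_nonneg f h hγ0 πk x)
  constructor
  · intro x
    have : Nonempty (X → U) := ⟨πk⟩
    exact le_antisymm (le_ciInf fun π => hle π x)
      (ciInf_le ⟨0, by rintro _ ⟨π, rfl⟩; exact Fcdf_nonneg f h hγ0 π x⟩ πk)
  · intro x hx
    have : Nonempty {π : X → U // Xfeas f h π = Xstar f h} := ⟨⟨πk, hX⟩⟩
    refine le_antisymm
      (le_ciSup (f := fun π : {π : X → U // Xfeas f h π = Xstar f h} => Vval f r γ π.1 x)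
        (Set.finite_range _).bddAbove ⟨πk, hX⟩) (ciSup_le ?_)
    rintro ⟨π, hπ⟩
    have hinv : ∀ y ∈ Xstar f h, f y (π y) ∈ Xstar f h := by
      intro y hy
      rw [← hπ] at hy ⊢
      intro t
      rw [← traj_succ_left]
      exact hy (t + 1)
    refine Vval_le_of_step_le f r hγ0 hγ1 π (Xstar f h) hinv _ (fun y hy => ?_) hx
    have hyk : y ∈ Xfeas f h πk := hX ▸ hy
    have hnext : f y (πk1 y) ∈ Xstar f h := by
      rw [← hX, ← Fcdf_eq_zero_iff f h hγ0]
      exact h1 y hyk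
    have hstay : Fcdf f h γ πk (f y (π y)) = 0 := by
      rw [Fcdf_eq_zero_iff f h hγ0, hX]
      exact hinv y hy
    calc r y (π y) + γ * Vval f r γ πk (f y (π y))
        ≤ r y (πk1 y) + γ * Vval f r γ πk (f y (πk1 y)) := h2 y hyk _ hstay
      _ = Vval f r γ πk1 y := by rw [Vval_step f r hγ0 hγ1 πk1 y, hV _ hnext]
      _ = Vval f r γ πk y := hV y hy
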